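/- Let (Ω, 𝔽, P) be a probability space and E a finite-dimensional real inner product space. Let η, η' : Ω → E be square-integrable with E[η] = E[η'] = 0, E[‖η‖²] = E[‖η'‖²] = v, and E[⟨η, η'⟩] = ρ · v for reals v ≥ 0 and ρ. Let μ, μ', ε ∈ E be fixed vectors, r = μ' − μ, let α_s, σ_s, β be reals, and define x^{LAMP} = α_s((1 − β)(μ + η) + β(μ' + η')) + σ_s ε and x^{μ} = α_s μ + σ_s ε. Then E[‖x^{LAMP} − x^{μ}‖²] = α_s² · [(1 − 2β(1 − β)(1 − ρ)) · v + β² · ‖r‖²]. -/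

import Mathlib

/-!
The error of the LAMP step is `αs` times the sum of the zero-mean noise `(1 - β)η + βη'` and the
deterministic lag bias `βr`. Centring kills their cross term, so the risk is the second moment of
the noise plus the squared bias.
-/

open MeasureTheory
open scoped RealInnerProductSpace

section

variable {Ω : Type*} [MeasurableSpace Ω] {P : Measure Ω}

lemma memLp_inner {𝕜 E : Type*} [RCLike 𝕜] [NormedAddCommGroup E] [InnerProductSpace 𝕜 E]
    {p q r : ENNReal} [ENNReal.HolderTriple p q r] {f g : Ω → E}
    (hf : MemLp f p P) (hg : MemLp g q P) : MemLp (fun ω ↦ inner 𝕜 (f ω) (g ω)) r P := by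
  refine hf.of_bilin (inner 𝕜) 1 hg (hf.1.inner hg.1) (.of_forall fun ω ↦ ?_)
  simpa using nnnorm_inner_le_nnnorm (𝕜 := 𝕜) (f ω) (g ω)

variable {E : Type*} [NormedAddCommGroup E] [InnerProductSpace ℝ E] {f g : Ω → E}

lemma integral_norm_add_sq (hf : MemLp f 2 P) (hg : MemLp g 2 P) :
    ∫ ω, ‖f ω + g ω‖ ^ 2 ∂P
      = ∫ ω, ‖f ω‖ ^ 2 ∂P + 2 * ∫ ω, ⟪f ω, g ω⟫ ∂P + ∫ ω, ‖g ω‖ ^ 2 ∂P := by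
  have hff : Integrable (fun ω ↦ ‖f ω‖ ^ 2) P := hf.integrable_norm_pow two_ne_zero
  have hgg : Integrable (fun ω ↦ ‖g ω‖ ^ 2) P := hg.integrable_norm_pow two_ne_zero
  have hfg : Integrable (fun ω ↦ 2 * ⟪f ω, g ω⟫) P :=
    (memLp_one_iff_integrable.1 (memLp_inner hf hg)).const_mul 2
  simp_rw [norm_add_sq_real]
  rw [integral_add (hff.fun_add hfg) hgg, integral_add hff hfg, integral_const_mul]

lemma integral_norm_smul_add_smul_sq (hf : MemLp f 2 P) (hg : MemLp g 2 P) (a b : ℝ) :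
    ∫ ω, ‖a • f ω + b • g ω‖ ^ 2 ∂P
      = a ^ 2 * ∫ ω, ‖f ω‖ ^ 2 ∂P + 2 * a * b * ∫ ω, ⟪f ω, g ω⟫ ∂P
        + b ^ 2 * ∫ ω, ‖g ω‖ ^ 2 ∂P := by
  have expand := integral_norm_add_sq (hf.const_smul a) (hg.const_smul b)
  simp only [Pi.smul_apply, norm_smul, mul_pow, Real.norm_eq_abs, sq_abs, real_inner_smul_left,
    real_inner_smul_right, integral_const_mul] at expand
  rw [expand]
  ring

lemma integral_norm_add_const_sq_of_integral_eq_zero [CompleteSpace E] [IsFiniteMeasure P]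
    (hf : MemLp f 2 P) (hf_mean : ∫ ω, f ω ∂P = 0) (c : E) :
    ∫ ω, ‖f ω + c‖ ^ 2 ∂P = ∫ ω, ‖f ω‖ ^ 2 ∂P + P.real Set.univ * ‖c‖ ^ 2 := by
  have cross_term : ∫ ω, ⟪f ω, c⟫ ∂P = 0 := by
    simp_rw [real_inner_comm c]
    rw [integral_inner (hf.integrable one_le_two), hf_mean, inner_zero_right]
  rw [integral_norm_add_sq hf (memLp_const c), cross_term, mul_zero, add_zero, integral_const,
    smul_eq_mul]

end

theorem lamp_one_step_risk_general
    {Ω : Type*} [MeasurableSpace Ω] (P : Measure Ω) [IsProbabilityMeasure P]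
    {E : Type*} [NormedAddCommGroup E] [InnerProductSpace ℝ E] [CompleteSpace E]
    (η η' : Ω → E) (hη : MemLp η 2 P) (hη' : MemLp η' 2 P)
    (hmean : ∫ ω, η ω ∂P = 0) (hmean' : ∫ ω, η' ω ∂P = 0) (v ρ : ℝ)
    (hv1 : ∫ ω, ‖η ω‖ ^ 2 ∂P = v) (hv2 : ∫ ω, ‖η' ω‖ ^ 2 ∂P = v)
    (hcov : ∫ ω, ⟪η ω, η' ω⟫ ∂P = ρ * v)
    (μ μ' ε : E) (r : E) (hr : r = μ' - μ) (αs σs β : ℝ)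
    (xLAMP : Ω → E)
    (hxLAMP : ∀ ω, xLAMP ω = αs • ((1 - β) • (μ + η ω) + β • (μ' + η' ω)) + σs • ε)
    (xμ : E) (hxμ : xμ = αs • μ + σs • ε) :
    ∫ ω, ‖xLAMP ω - xμ‖ ^ 2 ∂P
      = αs ^ 2 * ((1 - 2 * β * (1 - β) * (1 - ρ)) * v + β ^ 2 * ‖r‖ ^ 2) := by
  let noise : Ω → E := fun ω ↦ (1 - β) • η ω + β • η' ω
  have error_eq (ω : Ω) : xLAMP ω - xμ = αs • (noise ω + β • r) := by
    simp only [hxLAMP, hxμ, hr, noise]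
    module
  have noise_memLp : MemLp noise 2 P := (hη.const_smul (1 - β)).add (hη'.const_smul β)
  have noise_mean : ∫ ω, noise ω ∂P = 0 := by
    rw [integral_add ((hη.integrable one_le_two).fun_smul (1 - β))
      ((hη'.integrable one_le_two).fun_smul β), integral_smul, integral_smul, hmean, hmean',
      smul_zero, smul_zero, add_zero]
  have noise_sq : ∫ ω, ‖noise ω‖ ^ 2 ∂P = (1 - 2 * β * (1 - β) * (1 - ρ)) * v := by
    rw [integral_norm_smul_add_smul_sq hη hη', hv1, hv2, hcov]
    ring
  calc ∫ ω, ‖xLAMP ω - xμ‖ ^ 2 ∂P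
      = αs ^ 2 * ∫ ω, ‖noise ω + β • r‖ ^ 2 ∂P := by
        simp only [error_eq, norm_smul, mul_pow, Real.norm_eq_abs, sq_abs, integral_const_mul]
    _ = αs ^ 2 * (∫ ω, ‖noise ω‖ ^ 2 ∂P + ‖β • r‖ ^ 2) := by
        rw [integral_norm_add_const_sq_of_integral_eq_zero noise_memLp noise_mean, probReal_univ,
          one_mul]
    _ = αs ^ 2 * ((1 - 2 * β * (1 - β) * (1 - ρ)) * v + β ^ 2 * ‖r‖ ^ 2) := by
        rw [noise_sq, norm_smul, mul_pow, Real.norm_eq_abs, sq_abs]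

/-- One-step risk of the LAMP update under the local stationarity model. -/
theorem lamp_one_step_risk
    {Ω : Type*} [MeasurableSpace Ω] (P : Measure Ω) [IsProbabilityMeasure P]
    {E : Type*} [NormedAddCommGroup E] [InnerProductSpace ℝ E] [FiniteDimensional ℝ E]
    (η η' : Ω → E) (hη : MemLp η 2 P) (hη' : MemLp η' 2 P)
    (hmean : ∫ ω, η ω ∂P = 0) (hmean' : ∫ ω, η' ω ∂P = 0)
    (v ρ : ℝ) (hv : 0 ≤ v)
    (hv1 : ∫ ω, ‖η ω‖ ^ 2 ∂P = v) (hv2 : ∫ ω, ‖η' ω‖ ^ 2 ∂P = v)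
    (hcov : ∫ ω, ⟪η ω, η' ω⟫ ∂P = ρ * v)
    (μ μ' ε : E) (r : E) (hr : r = μ' - μ) (αs σs β : ℝ)
    (xLAMP : Ω → E)
    (hxLAMP : ∀ ω, xLAMP ω = αs • ((1 - β) • (μ + η ω) + β • (μ' + η' ω)) + σs • ε)
    (xμ : E) (hxμ : xμ = αs • μ + σs • ε) :
    ∫ ω, ‖xLAMP ω - xμ‖ ^ 2 ∂P
      = αs ^ 2 * ((1 - 2 * β * (1 - β) * (1 - ρ)) * v + β ^ 2 * ‖r‖ ^ 2) :=
  have : CompleteSpace E := FiniteDimensional.complete ℝ E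
  lamp_one_step_risk_general P η η' hη hη' hmean hmean' v ρ hv1 hv2 hcov μ μ' ε r hr αs σs β
    xLAMP hxLAMP xμ hxμ
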